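/- Suppose ψ ∈ C⁰([0,1]) with ψ(0) < 0 and ψ(1) < 0 is symmetric, i.e. ψ(x) = ψ(1−x) for all x ∈ (0,1). Let u₀ ∈ W^{3,∞}(0,1) ∩ H satisfy u₀''(0) = u₀''(1) = 0 and u₀(x) = u₀(1−x) for all x ∈ (0,1), and let (u(t))_{t≥0} be an Obstacle Gradient Flow for the elastic energy starting at u₀. Then u(t)(1−x) = u(t)(x) for all t ≥ 0 and all x ∈ (0,1), i.e. the flow preserves symmetry. -/

import Mathlib

open MeasureTheory Set Filter Topology

noncomputable section

/-- Membership in `H = W^{2,2}(0,1) ∩ W₀^{1,2}(0,1)`: `u1` is the (continuous) derivative of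
`u` on `[0,1]`, `u1` is absolutely continuous with (integrable) derivative `u2 ∈ L²(0,1)`,
and `u(0) = u(1) = 0`. -/
def MemH (u u1 u2 : ℝ → ℝ) : Prop :=
  (∀ x ∈ Icc (0:ℝ) 1, HasDerivWithinAt u (u1 x) (Icc 0 1) x) ∧
  (∀ x ∈ Icc (0:ℝ) 1, u1 x = u1 0 + ∫ t in (0:ℝ)..x, u2 t) ∧
  IntegrableOn u2 (Icc (0:ℝ) 1) ∧
  IntegrableOn (fun x => (u2 x) ^ 2) (Icc (0:ℝ) 1) ∧
  u 0 = 0 ∧ u 1 = 0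

/-- Membership in the obstacle set `C = { u ∈ H : u ≥ ψ a.e. }`. -/
def MemC (ψ : ℝ → ℝ) (u u1 u2 : ℝ → ℝ) : Prop :=
  MemH u u1 u2 ∧ ∀ᵐ x ∂(volume.restrict (Icc (0:ℝ) 1)), ψ x ≤ u x

/-- The inner product of `H`: `(u,v) = ∫₀¹ u'' v''` (in terms of the second derivatives). -/
def Hip (u2 v2 : ℝ → ℝ) : ℝ := ∫ x in (0:ℝ)..1, u2 x * v2 x

/-- The norm of `H`: `‖u‖ = (∫₀¹ (u'')²)^{1/2}` (in terms of the second derivative). -/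
def Hnorm (u2 : ℝ → ℝ) : ℝ := Real.sqrt (∫ x in (0:ℝ)..1, (u2 x) ^ 2)

/-- The elastic (Willmore / Euler) bending energy `E(u) = ∫₀¹ u''²/(1+u'²)^{5/2}`. -/
def elE (u1 u2 : ℝ → ℝ) : ℝ :=
  ∫ x in (0:ℝ)..1, (u2 x) ^ 2 / (1 + (u1 x) ^ 2) ^ ((5:ℝ)/2)

/-- The gradient pairing of the elastic energy:
`(∇E(u), φ) = 2∫₀¹ u''φ''/(1+u'²)^{5/2} - 5∫₀¹ u''²u'φ'/(1+u'²)^{7/2}`. -/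
def elDE (u1 u2 φ1 φ2 : ℝ → ℝ) : ℝ :=
  2 * (∫ x in (0:ℝ)..1, u2 x * φ2 x / (1 + (u1 x) ^ 2) ^ ((5:ℝ)/2))
  - 5 * (∫ x in (0:ℝ)..1, (u2 x) ^ 2 * u1 x * φ1 x / (1 + (u1 x) ^ 2) ^ ((7:ℝ)/2))

/-- An Obstacle Gradient Flow for the elastic energy on
`H = W^{2,2}(0,1) ∩ W₀^{1,2}(0,1)` with obstacle set `C = {u ∈ H : u ≥ ψ a.e.}`:
the curve `t ↦ u(t)` (with space derivatives `u1, u2`) starts at `u₀`, stays in `C`,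
is locally `W^{1,2}` in time with values in `H` and a.e. time derivative `v(t) ∈ H`
(with space derivatives `v1, v2`), and satisfies the flow variational inequality
`(u̇(t), w - u(t)) + (∇E(u(t)), w - u(t)) ≥ 0` for all `w ∈ C`, for a.e. `t > 0`. -/
structure IsOGFel (ψ : ℝ → ℝ) (u u1 u2 v v1 v2 : ℝ → ℝ → ℝ)
    (u₀ u₀1 u₀2 : ℝ → ℝ) : Prop where
  init : ∀ x, u 0 x = u₀ x
  init1 : ∀ x ∈ Icc (0:ℝ) 1, u1 0 x = u₀1 x
  init2 : ∀ x ∈ Icc (0:ℝ) 1, u2 0 x = u₀2 x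
  memC : ∀ t : ℝ, 0 ≤ t → MemC ψ (u t) (u1 t) (u2 t)
  vMemH : ∀ᵐ t ∂(volume.restrict (Ioi (0:ℝ))), MemH (v t) (v1 t) (v2 t)
  derivAe : ∀ᵐ t ∂(volume.restrict (Ioi (0:ℝ))),
    Filter.Tendsto (fun h : ℝ => Hnorm (fun x => (u2 (t + h) x - u2 t x) / h - v2 t x))
      (nhdsWithin (0:ℝ) {(0:ℝ)}ᶜ) (nhds 0)
  ftc : ∀ s t : ℝ, 0 ≤ s → s ≤ t → ∀ x ∈ Icc (0:ℝ) 1,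
    u t x - u s x = ∫ r in s..t, v r x
  sqInt : ∀ T : ℝ, 0 < T →
    IntegrableOn (fun t => ∫ x in (0:ℝ)..1, (v2 t x) ^ 2) (Ioc 0 T)
  fvi : ∀ᵐ t ∂(volume.restrict (Ioi (0:ℝ))), ∀ w w1 w2 : ℝ → ℝ, MemC ψ w w1 w2 →
    0 ≤ Hip (v2 t) (fun x => w2 x - u2 t x)
        + elDE (u1 t) (u2 t) (fun x => w1 x - u1 t x) (fun x => w2 x - u2 t x)

lemma ac_of_dist_le {y G : ℝ → ℝ} {a b K : ℝ} (hG : AbsolutelyContinuousOnInterval G a b)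
    (h : ∀ p ∈ uIcc a b, ∀ q ∈ uIcc a b, dist (y p) (y q) ≤ K * dist (G p) (G q)) :
    AbsolutelyContinuousOnInterval y a b := by
  unfold AbsolutelyContinuousOnInterval at hG ⊢
  have h2 := hG.const_mul K
  rw [mul_zero] at h2
  refine squeeze_zero' (Eventually.of_forall fun t => Finset.sum_nonneg fun i _ => dist_nonneg)
    ?_ h2
  rw [eventually_inf_principal]
  refine Eventually.of_forall fun E hE => ?_
  rw [Finset.mul_sum]
  refine Finset.sum_le_sum fun i hi => ?_
  exact h _ (hE.1 i hi).1 _ (hE.1 i hi).2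

lemma gronwall_aux {E : Type*} [NormedAddCommGroup E] [InnerProductSpace ℝ E]
    (D W : ℝ → E) (T : ℝ) (hT : 0 ≤ T) (hW : IntervalIntegrable W volume 0 T)
    (hD : ∀ a b, 0 ≤ a → a ≤ b → b ≤ T → D b - D a = ∫ r in a..b, W r)
    (hder : ∀ᵐ t, t ∈ Ioo 0 T → HasDerivAt D (W t) t) (C : ℝ)
    (hineq : ∀ᵐ t, t ∈ Ioo 0 T → 2 * inner ℝ (D t) (W t) ≤ C * ‖D t‖ ^ 2) (h0 : D 0 = 0) :
    D T = 0 := by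
  have hWn : IntervalIntegrable (fun r => ‖W r‖) volume 0 T := hW.norm
  have hGac := hWn.absolutelyContinuousOnInterval_intervalIntegral (c := 0) (by simp)
  set G : ℝ → ℝ := fun x => ∫ v in (0:ℝ)..x, ‖W v‖ with hGdef
  have hsub : ∀ p, 0 ≤ p → p ≤ T → IntervalIntegrable (fun r => ‖W r‖) volume 0 p := by
    intro p h1 h2
    refine hWn.mono_set ?_
    rw [uIcc_of_le h1, uIcc_of_le hT]; exact Icc_subset_Icc_right h2
  have hdist0 : ∀ p q, 0 ≤ p → p ≤ q → q ≤ T → ‖D q - D p‖ ≤ G q - G p := by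
    intro p q h1 h2 h3
    rw [hD p q h1 h2 h3, hGdef]
    simp only
    rw [intervalIntegral.integral_interval_sub_left (hsub q (h1.trans h2) h3)
      (hsub p h1 (h2.trans h3))]
    exact intervalIntegral.norm_integral_le_integral_norm h2
  have hbd : ∀ p, 0 ≤ p → p ≤ T → ‖D p‖ ≤ G T := by
    intro p h1 h2
    have e1 := hdist0 0 p le_rfl h1 h2
    have e2 := hdist0 p T h1 h2 le_rfl
    have e3 := norm_nonneg (D T - D p)
    have e4 : G 0 = 0 := by simp [hGdef]
    rw [h0, sub_zero] at e1
    linarith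
  have hy0 : ∀ p q, 0 ≤ p → p ≤ q → q ≤ T →
      dist (‖D p‖ ^ 2) (‖D q‖ ^ 2) ≤ 2 * G T * dist (G p) (G q) := by
    intro p q h1 h2 h3
    have e1 := hbd p h1 (h2.trans h3)
    have e2 := hbd q (h1.trans h2) h3
    have e3 := hdist0 p q h1 h2 h3
    have e4 : |‖D p‖ - ‖D q‖| ≤ ‖D q - D p‖ := by
      rw [norm_sub_rev]; exact abs_norm_sub_norm_le _ _
    rw [Real.dist_eq, Real.dist_eq]
    have : ‖D p‖ ^ 2 - ‖D q‖ ^ 2 = (‖D p‖ + ‖D q‖) * (‖D p‖ - ‖D q‖) := by ring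
    rw [this, abs_mul, abs_of_nonneg (by positivity)]
    have e5 : |‖D p‖ - ‖D q‖| ≤ |G p - G q| := by
      rw [abs_sub_comm (G p)]
      exact e4.trans (e3.trans (le_abs_self _))
    have : 0 ≤ ‖D p‖ := norm_nonneg _
    gcongr
    · linarith
    · linarith
  have hyac : AbsolutelyContinuousOnInterval (fun t => ‖D t‖ ^ 2) 0 T := by
    refine ac_of_dist_le (K := 2 * G T) hGac ?_
    rw [uIcc_of_le hT]
    intro p hp q hq
    rcases le_total p q with h | h
    · exact hy0 p q hp.1 h hq.2
    · rw [dist_comm, dist_comm (G p)]; exact hy0 q p hq.1 h hp.2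
  have heac : AbsolutelyContinuousOnInterval (fun t : ℝ => Real.exp (-C * t)) 0 T := by
    apply ContDiffOn.absolutelyContinuousOnInterval
    fun_prop
  have hz := (heac.fun_mul hyac).integral_deriv_eq_sub
  have hneg : ∫ x in (0:ℝ)..T, deriv (fun t => Real.exp (-C * t) * ‖D t‖ ^ 2) x ≤ 0 := by
    rw [intervalIntegral.integral_of_le hT, integral_Ioc_eq_integral_Ioo]
    apply integral_nonpos_of_ae
    refine (ae_restrict_iff' measurableSet_Ioo).2 ?_
    filter_upwards [hder, hineq] with t h1 h2 ht
    have e1 := (h1 ht).norm_sq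
    have e2 : HasDerivAt (fun t : ℝ => Real.exp (-C * t)) (Real.exp (-C * t) * (-C * 1)) t :=
      ((hasDerivAt_id t).const_mul (-C)).exp
    have e3 := e2.mul e1
    have e4 := e3.deriv
    have e5 := h2 ht
    show deriv (fun t => Real.exp (-C * t) * ‖D t‖ ^ 2) t ≤ 0
    have : deriv (fun t => Real.exp (-C * t) * ‖D t‖ ^ 2) t = _ := e4
    rw [this]
    nlinarith [Real.exp_pos (-C * t)]
  rw [hz] at hneg
  simp only [h0] at hneg
  have : ‖D T‖ ^ 2 ≤ 0 := by
    have := Real.exp_pos (-C * T)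
    by_contra hc
    push Not at hc
    have := mul_pos this hc
    simp only [norm_zero] at hneg
    nlinarith
  have : ‖D T‖ = 0 := by nlinarith [norm_nonneg (D T)]
  exact norm_eq_zero.1 this

/-- Lebesgue measure on the unit interval. -/
abbrev muI : Measure ℝ := volume.restrict (Icc (0:ℝ) 1)

lemma ii_eq (f : ℝ → ℝ) : ∫ x in (0:ℝ)..1, f x = ∫ x, f x ∂muI := by
  rw [intervalIntegral.integral_of_le zero_le_one, integral_Icc_eq_integral_Ioc]

lemma ii_of_on {f : ℝ → ℝ} (h : IntegrableOn f (Icc (0:ℝ) 1)) {a b : ℝ} (ha : a ∈ Icc (0:ℝ) 1)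
    (hb : b ∈ Icc (0:ℝ) 1) : IntervalIntegrable f volume a b := by
  refine (h.mono_set ?_).intervalIntegrable
  exact uIcc_subset_Icc ha hb

lemma by_parts {f1 f2 : ℝ → ℝ} {c : ℝ} (h2 : IntegrableOn f2 (Icc (0:ℝ) 1))
    (h1 : ∀ x ∈ Icc (0:ℝ) 1, f1 x = c + ∫ t in (0:ℝ)..x, f2 t) {x : ℝ} (hx : x ∈ Icc (0:ℝ) 1) :
    ∫ y in (0:ℝ)..x, (x - y) * f2 y = (∫ y in (0:ℝ)..x, f1 y) - x * c := by
  have hii := ii_of_on h2 (left_mem_Icc.2 zero_le_one) hx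
  have hsub : uIcc 0 x ⊆ Icc (0:ℝ) 1 := uIcc_subset_Icc (left_mem_Icc.2 zero_le_one) hx
  have hg := hii.absolutelyContinuousOnInterval_intervalIntegral (c := 0) (by simp)
  have hp : AbsolutelyContinuousOnInterval (fun y : ℝ => x - y) 0 x := by
    apply ContDiffOn.absolutelyContinuousOnInterval
    fun_prop
  have key := hp.integral_mul_deriv_eq_deriv_mul hg
  have e1 : ∫ y in (0:ℝ)..x, (x - y) * deriv (fun x => ∫ v in (0:ℝ)..x, f2 v) y
      = ∫ y in (0:ℝ)..x, (x - y) * f2 y := by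
    apply intervalIntegral.integral_congr_ae
    filter_upwards [hii.ae_hasDerivAt_integral] with y hy hy2
    rw [(hy (uIoc_subset_uIcc hy2) 0 (by simp)).deriv]
  have e2 : ∫ y in (0:ℝ)..x, deriv (fun y : ℝ => x - y) y * (∫ v in (0:ℝ)..y, f2 v)
      = ∫ y in (0:ℝ)..x, (c - f1 y) := by
    apply intervalIntegral.integral_congr
    intro y hy
    simp only [h1 y (hsub hy)]
    have : deriv (fun y : ℝ => x - y) y = -1 := by
      simp
    rw [this]; ring
  have hf1 : IntervalIntegrable f1 volume 0 x := by
    apply ContinuousOn.intervalIntegrable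
    have : ContinuousOn (fun y => c + ∫ v in (0:ℝ)..y, f2 v) (uIcc 0 x) :=
      continuousOn_const.add hg.continuousOn
    exact this.congr fun y hy => h1 y (hsub hy)
  rw [e1, e2, intervalIntegral.integral_sub (by simp) hf1] at key
  rw [key]
  simp

lemma MemH.cont1 {f f1 f2 : ℝ → ℝ} (h : MemH f f1 f2) : ContinuousOn f1 (Icc 0 1) := by
  have hii := ii_of_on h.2.2.1 (left_mem_Icc.2 zero_le_one) (right_mem_Icc.2 zero_le_one)
  have hg := hii.absolutelyContinuousOnInterval_intervalIntegral (c := 0) (by simp)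
  have := hg.continuousOn
  rw [uIcc_of_le zero_le_one] at this
  exact (continuousOn_const.add this).congr fun y hy => h.2.1 y hy

lemma MemH.memLp {f f1 f2 : ℝ → ℝ} (h : MemH f f1 f2) : MemLp f2 2 muI :=
  (memLp_two_iff_integrable_sq h.2.2.1.aestronglyMeasurable).2 h.2.2.2.1

/-- The Green function of the second derivative with zero boundary values. -/
def kern (x y : ℝ) : ℝ := max (x - y) 0 - x * (1 - y)

lemma kern_cont (x : ℝ) : Continuous (kern x) := by unfold kern; fun_prop

lemma kern_memLp (x : ℝ) : MemLp (kern x) 2 muI := by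
  rw [memLp_two_iff_integrable_sq (kern_cont x).aestronglyMeasurable]
  exact (((kern_cont x).pow 2).continuousOn.integrableOn_Icc)

lemma kern_int {z : ℝ → ℝ} (h2 : IntegrableOn z (Icc (0:ℝ) 1)) {x : ℝ} (hx : x ∈ Icc (0:ℝ) 1) :
    ∫ y, kern x y * z y ∂muI = (∫ y in (0:ℝ)..x, (x - y) * z y)
      - x * ∫ y in (0:ℝ)..1, (1 - y) * z y := by
  have i0 := ii_of_on h2 (left_mem_Icc.2 zero_le_one) (right_mem_Icc.2 zero_le_one)
  have i1 : IntervalIntegrable (fun y => max (x - y) 0 * z y) volume 0 1 :=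
    i0.continuousOn_mul (by fun_prop)
  have i2 : IntervalIntegrable (fun y => x * ((1 - y) * z y)) volume 0 1 :=
    (i0.continuousOn_mul (by fun_prop)).const_mul x
  rw [← ii_eq]
  have : (fun y => kern x y * z y) = fun y => max (x - y) 0 * z y - x * ((1 - y) * z y) := by
    ext y; unfold kern; ring
  rw [this, intervalIntegral.integral_sub i1 i2, intervalIntegral.integral_const_mul]
  congr 1
  have s0 : uIcc 0 x ⊆ uIcc (0:ℝ) 1 := by
    rw [uIcc_of_le zero_le_one]; exact uIcc_subset_Icc (left_mem_Icc.2 zero_le_one) hx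
  have s1 : uIcc x 1 ⊆ uIcc (0:ℝ) 1 := by
    rw [uIcc_of_le zero_le_one]; exact uIcc_subset_Icc hx (right_mem_Icc.2 zero_le_one)
  rw [← intervalIntegral.integral_add_adjacent_intervals (i1.mono_set s0) (i1.mono_set s1)]
  have z1 : ∫ y in x..1, max (x - y) 0 * z y = 0 := by
    rw [← intervalIntegral.integral_zero (a := x) (b := 1) (μ := volume) (E := ℝ)]
    apply intervalIntegral.integral_congr
    intro y hy
    rw [uIcc_of_le hx.2] at hy
    simp [max_eq_right (sub_nonpos.2 hy.1)]
  rw [z1, add_zero]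
  apply intervalIntegral.integral_congr
  intro y hy
  rw [uIcc_of_le hx.1] at hy
  simp [max_eq_left (sub_nonneg.2 hy.2)]

lemma MemH.repr {f f1 f2 : ℝ → ℝ} (h : MemH f f1 f2) {x : ℝ} (hx : x ∈ Icc (0:ℝ) 1) :
    f x = ∫ y, kern x y * f2 y ∂muI := by
  have ftc : ∀ x ∈ Icc (0:ℝ) 1, ∫ y in (0:ℝ)..x, f1 y = f x := by
    intro x hx
    have hs : Icc 0 x ⊆ Icc (0:ℝ) 1 := Icc_subset_Icc_right hx.2
    have := intervalIntegral.integral_eq_sub_of_hasDeriv_right_of_le (f := f) (f' := f1) hx.1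
      (fun y hy => (h.1 y (hs hy)).continuousWithinAt.mono hs)
      (fun y hy => ((h.1 y (hs (Ioo_subset_Icc_self hy))).hasDerivAt
        (Icc_mem_nhds hy.1 (hy.2.trans_le hx.2))).hasDerivWithinAt)
      ((h.cont1.mono (uIcc_subset_Icc (left_mem_Icc.2 zero_le_one) hx)).intervalIntegrable)
    rw [this, h.2.2.2.2.1, sub_zero]
  have b1 := by_parts h.2.2.1 h.2.1 hx
  have b2 := by_parts h.2.2.1 h.2.1 (right_mem_Icc.2 zero_le_one)
  rw [ftc x hx] at b1
  rw [ftc 1 (right_mem_Icc.2 zero_le_one), h.2.2.2.2.2] at b2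
  rw [kern_int h.2.2.1 hx, b1, b2]
  ring

lemma kern_inj {z : ℝ → ℝ} (h2 : IntegrableOn z (Icc (0:ℝ) 1))
    (h : ∀ x ∈ Icc (0:ℝ) 1, ∫ y, kern x y * z y ∂muI = 0) : z =ᵐ[muI] 0 := by
  have i0 := ii_of_on h2 (left_mem_Icc.2 zero_le_one) (right_mem_Icc.2 zero_le_one)
  set c := ∫ y in (0:ℝ)..1, (1 - y) * z y with hc
  set f1 : ℝ → ℝ := fun x => -c + ∫ t in (0:ℝ)..x, z t with hf1
  have hg := i0.absolutelyContinuousOnInterval_intervalIntegral (c := 0) (by simp)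
  have hf1c : ContinuousOn f1 (Icc 0 1) := by
    have := hg.continuousOn
    rw [uIcc_of_le zero_le_one] at this
    exact continuousOn_const.add this
  have hint : ∀ x ∈ Icc (0:ℝ) 1, ∫ y in (0:ℝ)..x, f1 y = 0 := by
    intro x hx
    have b1 := by_parts (f1 := f1) h2 (fun x _ => rfl) hx
    have b2 := h x hx
    rw [kern_int h2 hx, b1, ← hc] at b2
    linarith
  have hf10 : ∀ x ∈ Ioo (0:ℝ) 1, f1 x = 0 := by
    intro x hx
    have hn : Icc (0:ℝ) 1 ∈ 𝓝 x := Icc_mem_nhds hx.1 hx.2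
    have d1 : HasDerivAt (fun x => ∫ y in (0:ℝ)..x, f1 y) (f1 x) x := by
      apply intervalIntegral.integral_hasDerivAt_right
      · exact (hf1c.mono (uIcc_subset_Icc (left_mem_Icc.2 zero_le_one)
          (Ioo_subset_Icc_self hx))).intervalIntegrable
      · exact (hf1c.mono Ioo_subset_Icc_self).stronglyMeasurableAtFilter isOpen_Ioo x hx
      · exact hf1c.continuousAt hn
    have d2 : HasDerivAt (fun x => ∫ y in (0:ℝ)..x, f1 y) 0 x :=
      (hasDerivAt_const x (0:ℝ)).congr_of_eventuallyEq (by
        filter_upwards [hn] with y hy using hint y hy)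
    exact d1.unique d2
  have hae := i0.ae_hasDerivAt_integral
  have : ∀ᵐ x ∂(volume.restrict (Ioo (0:ℝ) 1)), z x = 0 := by
    rw [ae_restrict_iff' measurableSet_Ioo]
    filter_upwards [hae] with x hx hx1
    have d1 := (hx (by rw [uIcc_of_le zero_le_one]; exact Ioo_subset_Icc_self hx1) 0
      (by simp)).const_add (-c)
    have d2 : HasDerivAt f1 0 x :=
      (hasDerivAt_const x (0:ℝ)).congr_of_eventuallyEq (by
        filter_upwards [Ioo_mem_nhds hx1.1 hx1.2] with y hy using hf10 y hy)
    exact d1.unique d2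
  have h3 : muI = volume.restrict (Ioo (0:ℝ) 1) := (Measure.restrict_congr_set Ioo_ae_eq_Icc).symm
  rw [h3]
  exact this

lemma MemH.sub {f f1 f2 g g1 g2 : ℝ → ℝ} (h : MemH f f1 f2) (k : MemH g g1 g2) :
    MemH (fun x => f x - g x) (fun x => f1 x - g1 x) (fun x => f2 x - g2 x) := by
  refine ⟨fun x hx => (h.1 x hx).sub (k.1 x hx), fun x hx => ?_, h.2.2.1.sub k.2.2.1, ?_, ?_, ?_⟩
  · have l := left_mem_Icc.2 (zero_le_one (α := ℝ))
    beta_reduce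
    rw [intervalIntegral.integral_sub (ii_of_on h.2.2.1 l hx) (ii_of_on k.2.2.1 l hx),
      h.2.1 x hx, k.2.1 x hx]
    ring
  · exact (h.memLp.sub k.memLp).integrable_sq
  · simp [h.2.2.2.2.1, k.2.2.2.2.1]
  · simp [h.2.2.2.2.2, k.2.2.2.2.2]

lemma mp_refl : MeasurePreserving (fun x : ℝ => 1 - x) muI muI := by
  have h := (Measure.measurePreserving_sub_left (volume : Measure ℝ) 1).restrict_preimage
    (s := Icc (0:ℝ) 1) measurableSet_Icc
  have : (fun x : ℝ => 1 - x) ⁻¹' Icc (0:ℝ) 1 = Icc 0 1 := by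
    ext x; simp only [mem_preimage, mem_Icc]; constructor <;> rintro ⟨h1, h2⟩ <;> constructor <;> linarith
  rwa [this] at h

lemma me_refl : MeasurableEmbedding (fun x : ℝ => 1 - x) :=
  (Homeomorph.subLeft (1:ℝ)).measurableEmbedding

lemma MemH.reflect {f f1 f2 : ℝ → ℝ} (h : MemH f f1 f2) :
    MemH (fun x => f (1 - x)) (fun x => -f1 (1 - x)) (fun x => f2 (1 - x)) := by
  have hm : ∀ x ∈ Icc (0:ℝ) 1, 1 - x ∈ Icc (0:ℝ) 1 := fun x hx =>
    ⟨by linarith [hx.2], by linarith [hx.1]⟩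
  have l := left_mem_Icc.2 (zero_le_one (α := ℝ))
  have r := right_mem_Icc.2 (zero_le_one (α := ℝ))
  refine ⟨fun x hx => ?_, fun x hx => ?_, ?_, ?_, ?_, ?_⟩
  · have e : HasDerivWithinAt (fun x : ℝ => 1 - x) (-1) (Icc 0 1) x :=
      ((hasDerivAt_id x).const_sub 1).hasDerivWithinAt
    have := (h.1 (1 - x) (hm x hx)).comp x e hm
    exact this.congr_deriv (by ring)
  · beta_reduce
    rw [h.2.1 _ (hm x hx), sub_zero, h.2.1 1 r]
    rw [intervalIntegral.integral_comp_sub_left (fun y => f2 y) 1, sub_zero]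
    rw [← intervalIntegral.integral_add_adjacent_intervals
      (ii_of_on h.2.2.1 l (hm x hx)) (ii_of_on h.2.2.1 (hm x hx) r)]
    ring
  · exact mp_refl.integrable_comp_of_integrable h.2.2.1
  · exact mp_refl.integrable_comp_of_integrable h.2.2.2.1
  · simp [h.2.2.2.2.2]
  · simp [h.2.2.2.2.1]

lemma int_refl (g : ℝ → ℝ) : ∫ x, g (1 - x) ∂muI = ∫ x, g x ∂muI :=
  mp_refl.integral_comp me_refl g

lemma abs_int_le {f : ℝ → ℝ} (h : MemLp f 2 muI) : ∫ x, |f x| ∂muI ≤ Hnorm f := by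
  have hi : Integrable f muI := h.integrable (by norm_num)
  have hs : Integrable (fun x => f x ^ 2) muI := h.integrable_sq
  have hm : muI.real univ = 1 := by simp [Measure.real]
  unfold Hnorm
  rw [ii_eq]
  apply Real.le_sqrt_of_sq_le
  set m := ∫ x, |f x| ∂muI with hmdef
  have e : 0 ≤ ∫ x, (|f x| - m) ^ 2 ∂muI := integral_nonneg fun x => sq_nonneg _
  have e2 : ∀ x, (|f x| - m) ^ 2 = (f x ^ 2 - 2 * m * |f x|) + m ^ 2 := by
    intro x; rw [← sq_abs (f x)]; ring
  simp_rw [e2] at e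
  have hk : Integrable (fun x => f x ^ 2 - 2 * m * |f x|) muI := hs.sub (hi.abs.const_mul _)
  rw [integral_add hk (integrable_const _),
    integral_sub hs (hi.abs.const_mul _), integral_const_mul, integral_const, hm, ← hmdef] at e
  simp at e
  nlinarith

lemma MemH.bound1 {f f1 f2 : ℝ → ℝ} (h : MemH f f1 f2) {x : ℝ} (hx : x ∈ Icc (0:ℝ) 1) :
    |f1 x| ≤ Hnorm f2 := by
  obtain ⟨c, hc, hc0⟩ := exists_hasDerivAt_eq_zero (f := f) (f' := f1) zero_lt_one
    (fun y hy => (h.1 y hy).continuousWithinAt) (by rw [h.2.2.2.2.1, h.2.2.2.2.2])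
    (fun y hy => (h.1 y (Ioo_subset_Icc_self hy)).hasDerivAt (Icc_mem_nhds hy.1 hy.2))
  have hc' := Ioo_subset_Icc_self hc
  have l := left_mem_Icc.2 (zero_le_one (α := ℝ))
  have e : f1 x = ∫ t in c..x, f2 t := by
    have a1 := h.2.1 x hx
    have a2 := h.2.1 c hc'
    rw [← intervalIntegral.integral_interval_sub_left (ii_of_on h.2.2.1 l hx)
      (ii_of_on h.2.2.1 l hc')]
    linarith
  refine le_trans ?_ (abs_int_le h.memLp)
  rw [e, ← Real.norm_eq_abs]
  refine intervalIntegral.norm_integral_le_integral_norm_uIoc.trans ?_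
  apply setIntegral_mono_set h.2.2.1.norm (Eventually.of_forall fun x => norm_nonneg _)
  exact (uIoc_subset_uIcc.trans (uIcc_subset_Icc hc' hx)).eventuallyLE

/-- first coefficient -/
def ca (p : ℝ) : ℝ := ((1 + p ^ 2) ^ ((5:ℝ)/2))⁻¹
/-- second coefficient -/
def cb (p : ℝ) : ℝ := p * ((1 + p ^ 2) ^ ((7:ℝ)/2))⁻¹

lemma ca_eq : ca = fun p => (1 + p ^ 2) ^ (-((5:ℝ)/2)) := by
  ext p; rw [ca, Real.rpow_neg (by positivity)]
lemma cb_eq : cb = fun p => p * (1 + p ^ 2) ^ (-((7:ℝ)/2)) := by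
  ext p; rw [cb, Real.rpow_neg (by positivity)]

lemma hbase (p : ℝ) : HasDerivAt (fun p : ℝ => 1 + p ^ 2) (2 * p) p := by
  have := ((hasDerivAt_id p).pow 2).const_add 1
  refine this.congr_deriv ?_
  simp

lemma pw_le (p s : ℝ) (hs : s ≤ -1) : (1 + p ^ 2) ^ s ≤ (1 + p ^ 2)⁻¹ := by
  rw [← Real.rpow_neg_one]
  exact Real.rpow_le_rpow_of_exponent_le (by nlinarith [sq_nonneg p]) hs

lemma pw_bd (p s c : ℝ) (hs : s ≤ -1) (hc : |c| ≤ 1 + p ^ 2) : |c * (1 + p ^ 2) ^ s| ≤ 1 := by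
  have h0 : 0 < 1 + p ^ 2 := by positivity
  rw [abs_mul, abs_of_nonneg (Real.rpow_nonneg h0.le s)]
  calc |c| * (1 + p ^ 2) ^ s ≤ (1 + p ^ 2) * (1 + p ^ 2)⁻¹ := by
        gcongr; exact pw_le p s hs
    _ = 1 := mul_inv_cancel₀ h0.ne'

lemma abs_le_base (p : ℝ) : |p| ≤ 1 + p ^ 2 := by
  rw [abs_le]; constructor <;> nlinarith [sq_nonneg (p - 1), sq_nonneg (p + 1)]

lemma ca_nonneg (p : ℝ) : 0 ≤ ca p := by unfold ca; positivity
lemma cb_bd (p : ℝ) : |cb p| ≤ 1 := by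
  rw [cb_eq]; exact pw_bd p _ p (by norm_num) (abs_le_base p)

lemma lip_of {f f' : ℝ → ℝ} {C : ℝ} (h : ∀ p, HasDerivAt f (f' p) p) (hb : ∀ p, |f' p| ≤ C)
    (p q : ℝ) : |f p - f q| ≤ C * |p - q| := by
  have := Convex.norm_image_sub_le_of_norm_hasDerivWithin_le (f := f) (f' := f') (C := C)
    (s := univ) (x := q) (y := p) (fun x _ => (h x).hasDerivWithinAt) (fun x _ => hb x) convex_univ
    (mem_univ _) (mem_univ _)
  simpa using this

lemma ca_deriv (p : ℝ) : HasDerivAt ca (-5 * (p * (1 + p ^ 2) ^ (-((7:ℝ)/2)))) p := by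
  rw [ca_eq]
  have := (hbase p).rpow_const (p := -((5:ℝ)/2)) (Or.inl (by positivity))
  refine this.congr_deriv ?_
  rw [show (-((5:ℝ)/2) - 1) = -((7:ℝ)/2) by norm_num]
  ring

lemma cb_deriv (p : ℝ) : HasDerivAt cb (1 * (1 + p ^ 2) ^ (-((7:ℝ)/2))
    - 7 * (p ^ 2 * (1 + p ^ 2) ^ (-((9:ℝ)/2)))) p := by
  rw [cb_eq]
  have := (hasDerivAt_id p).mul
    ((hbase p).rpow_const (p := -((7:ℝ)/2)) (Or.inl (by positivity)))
  refine this.congr_deriv ?_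
  rw [show (-((7:ℝ)/2) - 1) = -((9:ℝ)/2) by norm_num]
  simp only [id]
  ring

lemma ca_lip (p q : ℝ) : |ca p - ca q| ≤ 5 * |p - q| := by
  refine lip_of ca_deriv (fun p => ?_) p q
  have := pw_bd p (-((7:ℝ)/2)) p (by norm_num) (abs_le_base p)
  rw [abs_mul, abs_of_neg (by norm_num)]
  linarith

lemma cb_lip (p q : ℝ) : |cb p - cb q| ≤ 8 * |p - q| := by
  refine lip_of cb_deriv (fun p => ?_) p q
  have h1 := pw_bd p (-((7:ℝ)/2)) 1 (by norm_num) (by simp; positivity)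
  have h2 := pw_bd p (-((9:ℝ)/2)) (p ^ 2) (by norm_num) (by rw [abs_of_nonneg (sq_nonneg p)]; linarith)
  rw [abs_le] at *
  constructor <;> linarith [h1.1, h1.2, h2.1, h2.2]

lemma ca_cont : Continuous ca := continuous_iff_continuousAt.2 fun p => (ca_deriv p).continuousAt
lemma cb_cont : Continuous cb := continuous_iff_continuousAt.2 fun p => (cb_deriv p).continuousAt

lemma ptwise (p q A B S : ℝ) (hS : |p - q| ≤ S) :
    -(50 * (A ^ 2 * S ^ 2 + B ^ 2 * S ^ 2 + (A - B) ^ 2)) ≤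
      (2 * (A * (A - B) * ca p) - 5 * (A ^ 2 * (p - q) * cb p)) -
      (2 * (B * (A - B) * ca q) - 5 * (B ^ 2 * (p - q) * cb q)) := by
  have hS0 : 0 ≤ S := (abs_nonneg _).trans hS
  have e1 : |(A - B) * B * (ca p - ca q)| ≤ |A - B| * |B| * (5 * S) := by
    rw [abs_mul, abs_mul]
    have := ca_lip p q
    gcongr; linarith
  have e2 : |(p - q) * ((A + B) * (A - B) * cb p)| ≤ S * ((|A| + |B|) * |A - B| * 1) := by
    rw [abs_mul, abs_mul, abs_mul]
    have := cb_bd p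
    have := abs_add_le A B
    gcongr
  have e3 : |(p - q) * (B ^ 2 * (cb p - cb q))| ≤ S * (B ^ 2 * (8 * S)) := by
    rw [abs_mul, abs_mul, abs_of_nonneg (sq_nonneg B)]
    have := cb_lip p q
    gcongr; linarith
  have e4 : 0 ≤ (A - B) ^ 2 * ca p := mul_nonneg (sq_nonneg _) (ca_nonneg p)
  have f1 := sq_abs A
  have f2 := sq_abs B
  have f3 := sq_abs (A - B)
  have g1 := (abs_le.1 e1).1
  have g2 := (abs_le.1 e2).2
  have g3 := (abs_le.1 e3).2
  have k1 : |A - B| * |B| * S ≤ ((A - B) ^ 2 + B ^ 2 * S ^ 2) / 2 := by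
    rw [← f2, ← f3]; nlinarith [sq_nonneg (|A - B| - |B| * S)]
  have k2 : |A - B| * |A| * S ≤ ((A - B) ^ 2 + A ^ 2 * S ^ 2) / 2 := by
    rw [← f1, ← f3]; nlinarith [sq_nonneg (|A - B| - |A| * S)]
  have p1 : 0 ≤ A ^ 2 * S ^ 2 := by positivity
  have p2 : 0 ≤ B ^ 2 * S ^ 2 := by positivity
  have p3 := sq_nonneg (A - B)
  have id1 : (2 * (A * (A - B) * ca p) - 5 * (A ^ 2 * (p - q) * cb p)) -
      (2 * (B * (A - B) * ca q) - 5 * (B ^ 2 * (p - q) * cb q)) =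
      2 * ((A - B) ^ 2 * ca p) + 2 * ((A - B) * B * (ca p - ca q))
      - 5 * ((p - q) * ((A + B) * (A - B) * cb p))
      - 5 * ((p - q) * (B ^ 2 * (cb p - cb q))) := by ring
  rw [id1]
  nlinarith

lemma el_int {u1 u2 d1 d2 : ℝ → ℝ} (h1 : ContinuousOn u1 (Icc 0 1)) (h2 : MemLp u2 2 muI)
    (k1 : ContinuousOn d1 (Icc 0 1)) (k2 : MemLp d2 2 muI) :
    Integrable (fun x => u2 x * d2 x * ca (u1 x)) muI ∧
    Integrable (fun x => u2 x ^ 2 * d1 x * cb (u1 x)) muI := by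
  constructor
  · have : IntegrableOn (fun x => u2 x * d2 x) (Icc 0 1) := h2.integrable_mul k2
    exact this.mul_continuousOn (ca_cont.comp_continuousOn h1) isCompact_Icc
  · have : IntegrableOn (fun x => u2 x ^ 2) (Icc 0 1) := h2.integrable_sq
    exact (this.mul_continuousOn k1 isCompact_Icc).mul_continuousOn
      (cb_cont.comp_continuousOn h1) isCompact_Icc

lemma elDE_eq {u1 u2 d1 d2 : ℝ → ℝ} (h1 : ContinuousOn u1 (Icc 0 1)) (h2 : MemLp u2 2 muI)
    (k1 : ContinuousOn d1 (Icc 0 1)) (k2 : MemLp d2 2 muI) :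
    elDE u1 u2 d1 d2 = ∫ x, (2 * (u2 x * d2 x * ca (u1 x)) - 5 * (u2 x ^ 2 * d1 x * cb (u1 x))) ∂muI := by
  obtain ⟨i1, i2⟩ := el_int h1 h2 k1 k2
  rw [integral_sub (i1.const_mul 2) (i2.const_mul 5), integral_const_mul, integral_const_mul]
  unfold elDE
  rw [ii_eq, ii_eq]
  congr 3
  ext x
  unfold cb
  rw [div_eq_mul_inv]
  ring

lemma est {f f1 f2 : ℝ → ℝ} (h : MemH f f1 f2) :
    -(50 * (1 + ∫ x, f2 x ^ 2 ∂muI) * ∫ x, (f2 x - f2 (1 - x)) ^ 2 ∂muI) ≤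
    elDE f1 f2 (fun x => f1 x - -f1 (1 - x)) (fun x => f2 x - f2 (1 - x)) := by
  have hr := h.reflect
  have hd := h.sub hr
  set d1 := fun x => f1 x - -f1 (1 - x) with hd1
  set d2 := fun x => f2 x - f2 (1 - x) with hd2
  have q1 := elDE_eq h.cont1 h.memLp hd.cont1 hd.memLp
  have q2 := elDE_eq hr.cont1 hr.memLp hd.cont1 hd.memLp
  have i1 := el_int h.cont1 h.memLp hd.cont1 hd.memLp
  have i2 := el_int hr.cont1 hr.memLp hd.cont1 hd.memLp
  have cao : ∀ p, ca (-p) = ca p := fun p => by simp [ca]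
  have cbo : ∀ p, cb (-p) = -cb p := fun p => by simp [cb]
  have hanti : elDE (fun x => -f1 (1 - x)) (fun x => f2 (1 - x)) d1 d2 = - elDE f1 f2 d1 d2 := by
    rw [q1, q2, ← int_refl, ← integral_neg]
    congr 1
    ext x
    simp only [hd1, hd2, sub_sub_cancel, cao, cbo]
    ring
  set S := Hnorm d2 with hSdef
  have hS2 : S ^ 2 = ∫ x, d2 x ^ 2 ∂muI := by
    rw [hSdef, Hnorm, ii_eq, Real.sq_sqrt]
    exact integral_nonneg fun x => sq_nonneg _
  have j1 : Integrable (fun x => f2 x ^ 2 * S ^ 2) muI := h.memLp.integrable_sq.mul_const _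
  have j2 : Integrable (fun x => f2 (1 - x) ^ 2 * S ^ 2) muI := hr.memLp.integrable_sq.mul_const _
  have j3 : Integrable (fun x => d2 x ^ 2) muI := hd.memLp.integrable_sq
  have m1 : Integrable (fun x => 2 * (f2 x * d2 x * ca (f1 x)) - 5 * (f2 x ^ 2 * d1 x * cb (f1 x))) muI :=
    (i1.1.const_mul 2).sub (i1.2.const_mul 5)
  have m2 : Integrable (fun x => 2 * (f2 (1 - x) * d2 x * ca (-f1 (1 - x)))
      - 5 * (f2 (1 - x) ^ 2 * d1 x * cb (-f1 (1 - x)))) muI :=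
    (i2.1.const_mul 2).sub (i2.2.const_mul 5)
  have j12 : Integrable (fun x => f2 x ^ 2 * S ^ 2 + f2 (1 - x) ^ 2 * S ^ 2) muI := j1.add j2
  have key : ∫ x, -(50 * (f2 x ^ 2 * S ^ 2 + f2 (1 - x) ^ 2 * S ^ 2 + d2 x ^ 2)) ∂muI ≤
      ∫ x, ((2 * (f2 x * d2 x * ca (f1 x)) - 5 * (f2 x ^ 2 * d1 x * cb (f1 x))) -
        (2 * (f2 (1 - x) * d2 x * ca (-f1 (1 - x)))
      - 5 * (f2 (1 - x) ^ 2 * d1 x * cb (-f1 (1 - x))))) ∂muI := by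
    apply integral_mono_ae
    · exact ((j12.add j3).const_mul 50).neg
    · exact m1.sub m2
    · refine (ae_restrict_iff' measurableSet_Icc).2 (Eventually.of_forall fun x hx => ?_)
      exact ptwise (f1 x) (-f1 (1 - x)) (f2 x) (f2 (1 - x)) S (hd.bound1 hx)
  rw [integral_sub m1 m2, ← q1, ← q2, hanti, integral_neg, integral_const_mul, integral_add j12 j3,
    integral_add j1 j2, integral_mul_const, integral_mul_const,
    int_refl (fun x => f2 x ^ 2), ← hS2] at key
  rw [← hS2]
  nlinarith [sq_nonneg S]

/-- The Hilbert space of square integrable functions on the unit interval. -/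
abbrev XI := Lp ℝ 2 muI

open Classical in
/-- The class of a function in `XI`. -/
def toL (f : ℝ → ℝ) : XI := if h : MemLp f 2 muI then h.toLp f else 0

lemma toL_eq {f : ℝ → ℝ} (h : MemLp f 2 muI) : toL f = h.toLp f := dif_pos h

lemma toL_coe {f : ℝ → ℝ} (h : MemLp f 2 muI) : toL f =ᵐ[muI] f := by
  rw [toL_eq h]; exact h.coeFn_toLp

lemma inner_L {f : ℝ → ℝ} (h : MemLp f 2 muI) (Z : XI) :
    inner ℝ (toL f) Z = ∫ y, f y * Z y ∂muI := by
  rw [L2.inner_def]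
  apply integral_congr_ae
  filter_upwards [toL_coe h] with y hy
  rw [hy]
  simp [mul_comm]

lemma inner_LL {f g : ℝ → ℝ} (h : MemLp f 2 muI) (k : MemLp g 2 muI) :
    inner ℝ (toL f) (toL g) = ∫ y, f y * g y ∂muI := by
  rw [inner_L h]
  apply integral_congr_ae
  filter_upwards [toL_coe k] with y hy
  rw [hy]

lemma normsq_L {f : ℝ → ℝ} (h : MemLp f 2 muI) : ‖toL f‖ ^ 2 = ∫ y, f y ^ 2 ∂muI := by
  rw [← real_inner_self_eq_norm_sq, inner_LL h h]
  simp_rw [sq]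

lemma norm_L {f : ℝ → ℝ} (h : MemLp f 2 muI) : ‖toL f‖ = Hnorm f := by
  rw [Hnorm, ii_eq, ← normsq_L h, Real.sqrt_sq (norm_nonneg _)]

lemma toL_sub {f g : ℝ → ℝ} (h : MemLp f 2 muI) (k : MemLp g 2 muI) :
    toL (fun x => f x - g x) = toL f - toL g := by
  have hk : MemLp (fun x => f x - g x) 2 muI := h.sub k
  rw [toL_eq h, toL_eq k, toL_eq hk]; rfl

lemma toL_div {f : ℝ → ℝ} (h : MemLp f 2 muI) (c : ℝ) :
    toL (fun x => f x / c) = c⁻¹ • toL f := by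
  have e : (fun x => f x / c) = c⁻¹ • f := by ext x; simp [div_eq_inv_mul]
  rw [e, toL_eq h, toL_eq (h.const_smul c⁻¹)]; rfl

/-- Reflection operator. -/
def RI : XI →ₗᵢ[ℝ] XI := Lp.compMeasurePreservingₗᵢ ℝ (fun x : ℝ => 1 - x) mp_refl

lemma RI_toL {f : ℝ → ℝ} (h : MemLp f 2 muI) : RI (toL f) = toL (fun x => f (1 - x)) := by
  have hk : MemLp (fun x => f (1 - x)) 2 muI := h.comp_measurePreserving mp_refl
  rw [toL_eq h, toL_eq hk]; rfl

lemma RI_RI (Z : XI) : RI (RI Z) = Z := by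
  have h : MemLp Z 2 muI := Lp.memLp Z
  have e : Z = toL Z := by rw [toL_eq h, Lp.toLp_coeFn]
  have h' : MemLp (fun x => Z (1 - x)) 2 muI := h.comp_measurePreserving mp_refl
  rw [e, RI_toL h, RI_toL h']
  simp

lemma L_inj (Z : XI) (h : ∀ x ∈ Icc (0:ℝ) 1, inner ℝ (toL (kern x)) Z = 0) : Z = 0 := by
  have hm : MemLp Z 2 muI := Lp.memLp Z
  have := kern_inj (z := Z) (hm.integrable (by norm_num)) (fun x hx => by
    rw [← inner_L (kern_memLp x)]; exact h x hx)
  exact (Lp.eq_zero_iff_ae_eq_zero).2 this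

lemma MemH.reprL {f f1 f2 : ℝ → ℝ} (h : MemH f f1 f2) {x : ℝ} (hx : x ∈ Icc (0:ℝ) 1) :
    f x = inner ℝ (toL (kern x)) (toL f2) := by
  rw [inner_LL (kern_memLp x) h.memLp]; exact h.repr hx

section main
variable {ψ : ℝ → ℝ} {u u1 u2 v v1 v2 : ℝ → ℝ → ℝ} {u₀ u₀1 u₀2 : ℝ → ℝ}

lemma flow_deriv (hf : IsOGFel ψ u u1 u2 v v1 v2 u₀ u₀1 u₀2) :
    ∀ᵐ t ∂(volume.restrict (Ioi (0:ℝ))),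
      HasDerivAt (fun t => toL (u2 t)) (toL (v2 t)) t := by
  filter_upwards [hf.derivAe, hf.vMemH, ae_restrict_mem measurableSet_Ioi] with t h1 h2 ht
  rw [hasDerivAt_iff_tendsto_slope_zero, tendsto_iff_norm_sub_tendsto_zero]
  refine h1.congr' ?_
  have : ∀ᶠ h : ℝ in 𝓝[≠] 0, 0 < t + h := by
    apply nhdsWithin_le_nhds
    have : ContinuousAt (fun h : ℝ => t + h) 0 := by fun_prop
    exact this.eventually (lt_mem_nhds (by simpa using ht))
  filter_upwards [this] with h hh
  have m1 := (hf.memC (t + h) hh.le).1.memLp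
  have m2 := (hf.memC t (le_of_lt ht)).1.memLp
  have m3 : MemLp (fun x => (u2 (t + h) x - u2 t x)) 2 muI := m1.sub m2
  have m4 : MemLp (fun x => (u2 (t + h) x - u2 t x) / h) 2 muI := by
    have := m3.const_smul h⁻¹
    exact this.ae_eq (Eventually.of_forall fun x => by simp [div_eq_inv_mul])
  have m5 : MemLp (fun x => (u2 (t + h) x - u2 t x) / h - v2 t x) 2 muI := m4.sub h2.memLp
  rw [← norm_L m5, toL_sub m4 h2.memLp, toL_div m3, toL_sub m1 m2]

lemma flow_int (hf : IsOGFel ψ u u1 u2 v v1 v2 u₀ u₀1 u₀2) {T : ℝ} (hT : 0 < T) :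
    IntegrableOn (fun t => toL (v2 t)) (Ioc 0 T) := by
  have hle : volume.restrict (Ioc 0 T) ≤ volume.restrict (Ioi (0:ℝ)) :=
    Measure.restrict_mono Ioc_subset_Ioi_self le_rfl
  have hd := ae_mono hle (flow_deriv hf)
  have hv := ae_mono hle hf.vMemH
  have hm : AEStronglyMeasurable (fun t => toL (v2 t)) (volume.restrict (Ioc 0 T)) := by
    refine (aestronglyMeasurable_deriv (fun t => toL (u2 t)) _).congr ?_
    filter_upwards [hd] with t ht using ht.deriv
  have hi : Integrable (fun t => 1 + ∫ x in (0:ℝ)..1, (v2 t x) ^ 2) (volume.restrict (Ioc 0 T)) :=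
    (integrable_const _).add (hf.sqInt T hT)
  refine hi.mono' hm ?_
  filter_upwards [hv] with t ht
  rw [ii_eq, ← normsq_L ht.memLp]
  nlinarith [sq_nonneg (‖toL (v2 t)‖ - 1)]

lemma flow_ftc (hf : IsOGFel ψ u u1 u2 v v1 v2 u₀ u₀1 u₀2) {s t : ℝ} (hs : 0 ≤ s) (hst : s ≤ t) :
    toL (u2 t) - toL (u2 s) = ∫ r in s..t, toL (v2 r) := by
  have hii : IntervalIntegrable (fun r => toL (v2 r)) volume s t := by
    rw [intervalIntegrable_iff_integrableOn_Ioc_of_le hst]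
    exact (flow_int hf (T := t + 1) (by linarith)).mono_set
      (Ioc_subset_Ioc hs (by linarith))
  rw [← sub_eq_zero]
  apply L_inj
  intro x hx
  have e := hf.ftc s t hs hst x hx
  rw [(hf.memC t (hs.trans hst)).1.reprL hx, (hf.memC s hs).1.reprL hx] at e
  rw [inner_sub_right, inner_sub_right, e]
  have e2 := (innerSL ℝ (toL (kern x))).intervalIntegral_comp_comm hii
  simp only [innerSL_apply_apply] at e2
  rw [← e2, sub_eq_zero]
  apply intervalIntegral.integral_congr_ae
  have hv := (ae_restrict_iff' measurableSet_Ioi).1 hf.vMemH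
  filter_upwards [hv] with r hr hr2
  rw [uIoc_of_le hst] at hr2
  exact (hr (hs.trans_lt hr2.1)).reprL hx

lemma refl_C (hψsym : ∀ x ∈ Ioo (0:ℝ) 1, ψ x = ψ (1 - x)) {f f1 f2 : ℝ → ℝ}
    (h : MemC ψ f f1 f2) :
    MemC ψ (fun x => f (1 - x)) (fun x => -f1 (1 - x)) (fun x => f2 (1 - x)) := by
  refine ⟨h.1.reflect, ?_⟩
  have h1 : ∀ᵐ x ∂muI, ψ (1 - x) ≤ f (1 - x) := mp_refl.quasiMeasurePreserving.ae h.2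
  have h2 : ∀ᵐ x ∂muI, x ∈ Ioo (0:ℝ) 1 := by
    have h3 : muI = volume.restrict (Ioo (0:ℝ) 1) :=
      (Measure.restrict_congr_set Ioo_ae_eq_Icc).symm
    rw [h3]; exact ae_restrict_mem measurableSet_Ioo
  filter_upwards [h1, h2] with x hx hx2
  rw [hψsym x hx2]; exact hx

lemma flow_ineq (hψsym : ∀ x ∈ Ioo (0:ℝ) 1, ψ x = ψ (1 - x))
    (hf : IsOGFel ψ u u1 u2 v v1 v2 u₀ u₀1 u₀2) :
    ∀ᵐ t ∂(volume.restrict (Ioi (0:ℝ))),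
      2 * inner ℝ (toL (u2 t) - RI (toL (u2 t))) (toL (v2 t) - RI (toL (v2 t))) ≤
        200 * (1 + ‖toL (u2 t)‖ ^ 2) * ‖toL (u2 t) - RI (toL (u2 t))‖ ^ 2 := by
  filter_upwards [hf.fvi, hf.vMemH, ae_restrict_mem measurableSet_Ioi] with t h1 h2 ht
  have hC := hf.memC t (le_of_lt ht)
  have hH := hC.1
  have h3 := h1 _ _ _ (refl_C hψsym hC)
  have hr := hH.reflect
  have hd := hH.sub hr
  have hd' := hr.sub hH
  have hest := est hH
  have eD : toL (fun x => u2 t x - u2 t (1 - x)) = toL (u2 t) - RI (toL (u2 t)) := by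
    rw [toL_sub hH.memLp hr.memLp, RI_toL hH.memLp]
  have hneg : elDE (u1 t) (u2 t) (fun x => -u1 t (1 - x) - u1 t x) (fun x => u2 t (1 - x) - u2 t x)
      = - elDE (u1 t) (u2 t) (fun x => u1 t x - -u1 t (1 - x)) (fun x => u2 t x - u2 t (1 - x)) := by
    rw [elDE_eq hH.cont1 hH.memLp hd.cont1 hd.memLp, elDE_eq hH.cont1 hH.memLp hd'.cont1 hd'.memLp,
      ← integral_neg]
    congr 1
    ext x
    ring
  have hhip : Hip (v2 t) (fun x => u2 t (1 - x) - u2 t x)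
      = - inner ℝ (toL (v2 t)) (toL (u2 t) - RI (toL (u2 t))) := by
    rw [← eD, inner_LL h2.memLp hd.memLp, Hip, ii_eq, ← integral_neg]
    congr 1
    ext x
    ring
  rw [hneg, hhip] at h3
  rw [← normsq_L hH.memLp, ← normsq_L hd.memLp, eD] at hest
  have sym : inner ℝ (toL (u2 t) - RI (toL (u2 t))) (toL (v2 t) - RI (toL (v2 t)))
      = 2 * inner ℝ (toL (v2 t)) (toL (u2 t) - RI (toL (u2 t))) := by
    have e1 : inner ℝ (toL (u2 t) - RI (toL (u2 t))) (RI (toL (v2 t)))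
        = - inner ℝ (toL (u2 t) - RI (toL (u2 t))) (toL (v2 t)) := by
      rw [← RI.inner_map_map, RI_RI, map_sub, RI_RI, ← inner_neg_left, neg_sub]
    rw [inner_sub_right, e1, real_inner_comm]
    ring
  rw [sym]
  linarith

end main

/-- **Symmetry preservation.** If the obstacle `ψ` is symmetric (`ψ(x) = ψ(1-x)`) and the
initial datum `u₀ ∈ W^{3,∞}(0,1) ∩ H` with `u₀''(0) = u₀''(1) = 0` is symmetric, then the
Obstacle Gradient Flow for the elastic energy starting at `u₀` satisfies
`u(t)(1-x) = u(t)(x)` for all `t ≥ 0` and `x ∈ (0,1)`. -/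
theorem elastic_flow_symmetry_preservation
    (ψ : ℝ → ℝ) (hψcont : ContinuousOn ψ (Icc 0 1)) (hψ0 : ψ 0 < 0) (hψ1 : ψ 1 < 0)
    (hψsym : ∀ x ∈ Ioo (0:ℝ) 1, ψ x = ψ (1 - x))
    (u₀ u₀1 u₀2 u₀3 : ℝ → ℝ)
    (hu₀C : MemC ψ u₀ u₀1 u₀2)
    (hu₀W3 : ∀ x ∈ Icc (0:ℝ) 1, u₀2 x = u₀2 0 + ∫ y in (0:ℝ)..x, u₀3 y)
    (hu₀W3inf : ∃ M : ℝ, ∀ x ∈ Icc (0:ℝ) 1, |u₀3 x| ≤ M)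
    (hNav0 : u₀2 0 = 0) (hNav1 : u₀2 1 = 0)
    (hu₀sym : ∀ x ∈ Ioo (0:ℝ) 1, u₀ x = u₀ (1 - x))
    (u u1 u2 v v1 v2 : ℝ → ℝ → ℝ)
    (hflow : IsOGFel ψ u u1 u2 v v1 v2 u₀ u₀1 u₀2) :
    ∀ t : ℝ, 0 ≤ t → ∀ x ∈ Ioo (0:ℝ) 1, u t (1 - x) = u t x := by
  intro T hT x hx
  have hM0 := (hflow.memC T hT).1
  have hx' := Ioo_subset_Icc_self hx
  suffices hz : toL (u2 T) - RI (toL (u2 T)) = 0 by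
    have hd := hM0.sub hM0.reflect
    have := hd.reprL hx'
    rw [toL_sub hM0.memLp hM0.reflect.memLp, ← RI_toL hM0.memLp, hz, inner_zero_right] at this
    linarith
  set L : XI →L[ℝ] XI := ContinuousLinearMap.id ℝ XI - RI.toContinuousLinearMap with hL
  have hLa : ∀ Z, L Z = Z - RI Z := fun Z => rfl
  have hint : ∀ a b, 0 ≤ a → a ≤ b → IntervalIntegrable (fun r => toL (v2 r)) volume a b := by
    intro a b ha hab
    rw [intervalIntegrable_iff_integrableOn_Ioc_of_le hab]
    exact (flow_int hflow (T := b + 1) (by linarith)).mono_set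
      (Ioc_subset_Ioc ha (by linarith))
  have hbd : ∃ M, ∀ t ∈ Ioo 0 T, ‖toL (u2 t)‖ ≤ M := by
    refine ⟨‖toL (u2 0)‖ + ∫ r in (0:ℝ)..T, ‖toL (v2 r)‖, fun t ht => ?_⟩
    have e := flow_ftc hflow le_rfl ht.1.le
    have e1 : toL (u2 t) = toL (u2 0) + ∫ r in (0:ℝ)..t, toL (v2 r) := by rw [← e]; abel
    rw [e1]
    refine (norm_add_le _ _).trans ?_
    gcongr
    refine (intervalIntegral.norm_integral_le_integral_norm ht.1.le).trans ?_
    exact intervalIntegral.integral_mono_interval le_rfl ht.1.le ht.2.le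
      (Eventually.of_forall fun _ => norm_nonneg _) (hint 0 T le_rfl hT).norm
  obtain ⟨M, hM⟩ := hbd
  have key := gronwall_aux (fun t => L (toL (u2 t))) (fun t => L (toL (v2 t))) T hT
    ?_ ?_ ?_ (200 * (1 + M ^ 2)) ?_ ?_
  · exact key
  · have := hint 0 T le_rfl hT
    rw [intervalIntegrable_iff] at this ⊢
    exact L.integrable_comp this
  · intro a b ha hab hb
    rw [L.intervalIntegral_comp_comm (hint a b ha hab), ← flow_ftc hflow ha hab, map_sub]
  · filter_upwards [(ae_restrict_iff' measurableSet_Ioi).1 (flow_deriv hflow)] with t h1 ht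
    exact L.hasFDerivAt.comp_hasDerivAt t (h1 ht.1)
  · filter_upwards [(ae_restrict_iff' measurableSet_Ioi).1 (flow_ineq hψsym hflow)] with t h1 ht
    refine (h1 ht.1).trans ?_
    have := hM t ht
    simp only [hLa]
    gcongr
  · have h0 := (hflow.memC 0 le_rfl).1
    show toL (u2 0) - RI (toL (u2 0)) = 0
    apply L_inj
    intro y hy
    have hd := h0.sub h0.reflect
    rw [RI_toL h0.memLp, ← toL_sub h0.memLp h0.reflect.memLp, ← hd.reprL hy]
    rcases eq_or_lt_of_le hy.1 with h | h
    · rw [← h]; simp [h0.2.2.2.2.1, h0.2.2.2.2.2]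
    rcases eq_or_lt_of_le hy.2 with h' | h'
    · rw [h']; simp [h0.2.2.2.2.1, h0.2.2.2.2.2]
    rw [hflow.init, hflow.init, hu₀sym y ⟨h, h'⟩, sub_self]
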